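/- For k ≥ 1, the number of signed sets that are admissible pinnacle sets of B_{2k+1} but not of D_{2k+1} equals the binomial coefficient C(2k-1, k). -/

import Mathlib

/-- The pinnacle set of a word `w : Fin n → ℤ`: values `w i` (for `0 < i < n-1`)
strictly larger than both neighbors. -/
def PinSet (n : ℕ) (w : Fin n → ℤ) : Set ℤ :=
  {x | ∃ (i : ℕ) (h0 : 0 < i) (h2 : i + 1 < n),
    w ⟨i, by omega⟩ = x ∧ w ⟨i - 1, by omega⟩ < w ⟨i, by omega⟩ ∧
      w ⟨i + 1, h2⟩ < w ⟨i, by omega⟩}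

/-- `w : Fin n → ℤ` is the one-line notation of a signed permutation of rank `n`:
the absolute values of its entries are distinct elements of `{1,...,n}`
(hence a bijection onto `{1,...,n}`). -/
def IsSignedPerm (n : ℕ) (w : Fin n → ℤ) : Prop :=
  (∀ i, 1 ≤ |w i| ∧ |w i| ≤ (n : ℤ)) ∧ Function.Injective fun i => |w i|

/-- `S` is an admissible pinnacle set of the hyperoctahedral group `B_n`. -/
def APSB (n : ℕ) (S : Finset ℤ) : Prop :=
  ∃ w : Fin n → ℤ, IsSignedPerm n w ∧ PinSet n w = ↑S

/-- `S` is an admissible pinnacle set of the type `D` group `D_n`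
(signed permutations with an even number of negative one-line entries). -/
def APSD (n : ℕ) (S : Finset ℤ) : Prop :=
  ∃ w : Fin n → ℤ, IsSignedPerm n w ∧
    Even (Finset.univ.filter fun i => w i < 0).card ∧ PinSet n w = ↑S

/-- `S` is an admissible pinnacle set of the symmetric group `S_n`
(an unsigned permutation is a signed permutation with all entries positive). -/
def APSA (n : ℕ) (S : Finset ℤ) : Prop :=
  ∃ w : Fin n → ℤ, IsSignedPerm n w ∧ (∀ i, 0 < w i) ∧ PinSet n w = ↑S

/-- `T` is an admissible pinnacle set of the totally ordered finite set `X ⊆ ℤ`: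
it is the pinnacle set of some arrangement of the elements of `X`. -/
def APSOn (X : Finset ℤ) (T : Finset ℤ) : Prop :=
  ∃ w : Fin X.card → ℤ, Function.Injective w ∧ (∀ i, w i ∈ X) ∧
    PinSet X.card w = ↑T

/-!
Arranging a finite set `X` of integers so that exactly `S ⊆ X` are its pinnacles is possible if
and only if, for each `p ∈ S`, fewer elements of `S` are `≤ p` than elements of `X \ S` are `< p`.
To realize a signed set `S` in `B_n`, one chooses signs for the free values, those not occurring
in `S` up to sign; negative signs only help. Hence `S` is admissible for `B_n` but not for `D_n`
exactly when all free values can be negative, this gives an odd number of negative entries, and no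
free value can be positive. For `n = 2k + 1` the last condition is rigid: `S` has `k` elements,
`1` is not free, and no element of `S` exceeds a free value. The set of absolute values of `S`
then satisfies a ballot condition, the signs are free on its initial run `1, 2, …` and negative
elsewhere, and the parity condition decides the sign of the element of absolute value `1`.
Removing that element leaves signed ballot sets which obey Pascal's rule.
-/

section Words

open Finset

variable {α : Type*}

/-- The word `v 0, s 0, v 1, s 1, …, s (m - 1), v m, v (m + 1), …` realizing the values of `s` as
pinnacles. -/
def zigzag (m : ℕ) (s v : ℕ → α) (i : ℕ) : α :=
  if i < 2 * m then if Even i then v (i / 2) else s (i / 2) else v (i - m)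

lemma zigzag_two_mul_add_one {m j : ℕ} (hj : j < m) (s v : ℕ → α) :
    zigzag m s v (2 * j + 1) = s j := by
  have hdiv : (2 * j + 1) / 2 = j := by omega
  rw [zigzag, if_pos (by omega), if_neg (by simp), hdiv]

lemma zigzag_of_two_mul_le {m i : ℕ} (hi : 2 * m ≤ i) (s v : ℕ → α) :
    zigzag m s v i = v (i - m) :=
  if_neg hi.not_gt

lemma zigzag_two_mul {m j : ℕ} (hj : j ≤ m) (s v : ℕ → α) : zigzag m s v (2 * j) = v j := by
  obtain rfl | hj := hj.eq_or_lt
  · rw [zigzag_of_two_mul_le le_rfl, two_mul, Nat.add_sub_cancel]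
  · rw [zigzag, if_pos (by omega), if_pos (even_two_mul j), Nat.mul_div_cancel_left j two_pos]

lemma image_univ_fin_eq_image_range [DecidableEq α] (n : ℕ) (f : ℕ → α) :
    univ.image (fun i : Fin n => f i) = (range n).image f := by
  ext x
  simp only [mem_image, mem_univ, true_and, mem_range, Fin.exists_iff, exists_prop]

variable [LinearOrder α]

lemma exists_strictMonoOn_image_range_eq [Nonempty α] (S : Finset α) :
    ∃ s : ℕ → α, StrictMonoOn s (Set.Iio #S) ∧ (range #S).image s = S := by
  let e := S.orderEmbOfFin rfl
  let s : ℕ → α := Function.extend Fin.val e fun _ => Classical.arbitrary α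
  have s_apply (i : Fin #S) : s i = e i := Fin.val_injective.extend_apply _ _ i
  refine ⟨s, fun i hi j hj hij => ?_, ?_⟩
  · rw [s_apply ⟨i, hi⟩, s_apply ⟨j, hj⟩]
    exact e.strictMono hij
  · rw [← image_univ_fin_eq_image_range, funext s_apply]
    exact S.image_orderEmbOfFin_univ rfl

/-- The pinnacle criterion for a set `S` of pinnacles and a set `V` of non-pinnacles: below each
`p ∈ S` there are enough elements of `V` to separate and enclose the elements of `S` up to `p`. -/
def Undercuts (V S : Finset α) : Prop :=
  ∀ p ∈ S, #{q ∈ S | q ≤ p} < #{v ∈ V | v < p}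

lemma Undercuts.card_lt_card {V S : Finset α} (h : Undercuts V S) (hS : S.Nonempty) :
    #S < #V := by
  have hmax := h _ (S.max'_mem hS)
  rw [filter_true_of_mem fun q hq => S.le_max' q hq] at hmax
  exact hmax.trans_le (card_filter_le _ _)

lemma Undercuts.exists_succ_lt {V S : Finset α} (h : Undercuts V S) {s v : ℕ → α}
    (hs : StrictMonoOn s (Set.Iio #S)) (hsS : (range #S).image s = S)
    (hv : StrictMonoOn v (Set.Iio #V)) (hvV : (range #V).image v = V) {j : ℕ} (hj : j < #S) :
    j + 1 < #V ∧ v (j + 1) < s j := by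
  have hs_le : (range (j + 1)).image s ⊆ {q ∈ S | q ≤ s j} := by
    intro x hx
    obtain ⟨i, hi, rfl⟩ := mem_image.1 hx
    have hij : i ≤ j := Nat.lt_succ_iff.1 (mem_range.1 hi)
    have hi : i < #S := hij.trans_lt hj
    exact mem_filter.2 ⟨hsS ▸ mem_image_of_mem s (mem_range.2 hi), hs.monotoneOn hi hj hij⟩
  have hs_inj : Set.InjOn s (range (j + 1)) :=
    hs.injOn.mono fun i hi => (Nat.lt_succ_iff.1 (mem_range.1 hi)).trans_lt hj
  have hcard : #((range (j + 1)).image v) < #{x ∈ V | x < s j} :=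
    calc #((range (j + 1)).image v) ≤ #(range (j + 1)) := card_image_le
      _ = #((range (j + 1)).image s) := (card_image_of_injOn hs_inj).symm
      _ ≤ #{q ∈ S | q ≤ s j} := card_le_card hs_le
      _ < #{x ∈ V | x < s j} := h _ (hsS ▸ mem_image_of_mem s (mem_range.2 hj))
  obtain ⟨x, hx, hxv⟩ := exists_mem_notMem_of_card_lt_card hcard
  obtain ⟨hxV, hxs⟩ := mem_filter.1 hx
  obtain ⟨i, hi, rfl⟩ := mem_image.1 (hvV.symm ▸ hxV)
  have hi : i < #V := mem_range.1 hi
  have hji : j + 1 ≤ i := by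
    by_contra! hij
    exact hxv (mem_image_of_mem v (mem_range.2 hij))
  exact ⟨hji.trans_lt hi, (hv.monotoneOn (hji.trans_lt hi) hi hji).trans_lt hxs⟩

lemma image_zigzag {m l : ℕ} (hml : m ≤ l) (s v : ℕ → α) :
    (range (m + l)).image (zigzag m s v) = (range m).image s ∪ (range l).image v := by
  apply Subset.antisymm
  · intro x hx
    obtain ⟨i, hi, rfl⟩ := mem_image.1 hx
    rw [mem_range] at hi
    rw [mem_union, zigzag]
    split_ifs
    · exact .inr (mem_image_of_mem v (mem_range.2 (by omega)))
    · exact .inl (mem_image_of_mem s (mem_range.2 (by omega)))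
    · exact .inr (mem_image_of_mem v (mem_range.2 (by omega)))
  · refine union_subset (image_subset_iff.2 fun j hj => ?_) (image_subset_iff.2 fun j hj => ?_) <;>
      rw [mem_range] at hj
    · exact mem_image.2 ⟨2 * j + 1, mem_range.2 (by omega), zigzag_two_mul_add_one hj s v⟩
    · obtain hjm | hmj := le_total j m
      · exact mem_image.2 ⟨2 * j, mem_range.2 (by omega), zigzag_two_mul hjm s v⟩
      · refine mem_image.2 ⟨j + m, mem_range.2 (by omega), ?_⟩
        rw [zigzag_of_two_mul_le (by omega), Nat.add_sub_cancel]

lemma zigzag_lt_zigzag_succ {m l : ℕ} {s v : ℕ → α} (hv : StrictMonoOn v (Set.Iio l))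
    (hvs : ∀ j < m, j + 1 < l ∧ v (j + 1) < s j) {i : ℕ} (hi : i + 1 < m + l)
    (hascent : Even i ∨ 2 * m ≤ i) : zigzag m s v i < zigzag m s v (i + 1) := by
  by_cases him : i < 2 * m
  · obtain ⟨j, rfl⟩ := even_iff_exists_two_mul.1 (hascent.resolve_right him.not_ge)
    have hj : j < m := by omega
    obtain ⟨hjl, hjs⟩ := hvs j hj
    rw [zigzag_two_mul hj.le, zigzag_two_mul_add_one hj]
    exact (hv (Set.mem_Iio.2 (by omega)) hjl j.lt_succ_self).trans hjs
  · rw [zigzag_of_two_mul_le (by omega), zigzag_of_two_mul_le (by omega)]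
    exact hv (Set.mem_Iio.2 (by omega)) (Set.mem_Iio.2 (by omega)) (by omega)

lemma mem_pinSet_iff {n : ℕ} {f : ℕ → ℤ} {x : ℤ} :
    x ∈ PinSet n (fun i => f i) ↔
      ∃ i, i + 2 < n ∧ f i < f (i + 1) ∧ f (i + 2) < f (i + 1) ∧ f (i + 1) = x := by
  constructor
  · rintro ⟨i, hi, hin, rfl, hleft, hright⟩
    obtain ⟨i, rfl⟩ := Nat.exists_eq_add_one.2 hi
    exact ⟨i, hin, hleft, hright, rfl⟩
  · rintro ⟨i, hin, hleft, hright, rfl⟩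
    exact ⟨i + 1, i.succ_pos, hin, rfl, hleft, hright⟩

lemma pinSet_zigzag {m l : ℕ} {s v : ℕ → ℤ} (hv : StrictMonoOn v (Set.Iio l))
    (hvs : ∀ j < m, j + 1 < l ∧ v (j + 1) < s j) :
    PinSet (m + l) (fun i => zigzag m s v i) = (range m).image s := by
  ext x
  rw [mem_pinSet_iff, mem_coe, mem_image]
  constructor
  · rintro ⟨i, hi, -, hdescent, rfl⟩
    have hodd : ¬ (Even (i + 1) ∨ 2 * m ≤ i + 1) := fun h =>
      hdescent.not_gt (zigzag_lt_zigzag_succ hv hvs hi h)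
    rw [not_or, Nat.not_even_iff_odd] at hodd
    obtain ⟨j, hj⟩ := hodd.1
    have hjm : j < m := by omega
    exact ⟨j, mem_range.2 hjm, by rw [hj, zigzag_two_mul_add_one hjm]⟩
  · rintro ⟨j, hj, rfl⟩
    have hjm : j < m := mem_range.1 hj
    obtain ⟨hjl, hjs⟩ := hvs j hjm
    refine ⟨2 * j, by omega, zigzag_lt_zigzag_succ hv hvs (by omega) (.inl (even_two_mul j)), ?_,
      zigzag_two_mul_add_one hjm s v⟩
    rwa [zigzag_two_mul_add_one hjm, show 2 * j + 2 = 2 * (j + 1) by ring, zigzag_two_mul hjm]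

lemma notMem_pinSet_of_lt_succ {n i : ℕ} {f : ℕ → ℤ} (hf : Set.InjOn f (Set.Iio n))
    (hi : i + 1 < n) (h : f i < f (i + 1)) : f i ∉ PinSet n (fun i => f i) := by
  rw [mem_pinSet_iff]
  rintro ⟨j, hj, -, hright, hji⟩
  obtain rfl : j + 1 = i := hf (Set.mem_Iio.2 (by omega)) (Set.mem_Iio.2 (by omega)) hji
  exact hright.not_gt h

lemma notMem_pinSet_of_succ_lt {n i : ℕ} {f : ℕ → ℤ} (hf : Set.InjOn f (Set.Iio n))
    (hi : i + 1 < n) (h : f (i + 1) < f i) : f (i + 1) ∉ PinSet n (fun i => f i) := by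
  rw [mem_pinSet_iff]
  rintro ⟨j, hj, hleft, -, hji⟩
  obtain rfl : j = i :=
    Nat.succ_injective (hf (Set.mem_Iio.2 (by omega)) (Set.mem_Iio.2 hi) hji)
  exact hleft.not_gt h

/- The left neighbour of the first pinnacle up to `p`, and the right neighbours of all of them, are
distinct non-pinnacles below `p`. -/
lemma undercuts_of_pinSet_eq {n : ℕ} {f : ℕ → ℤ} (hf : Set.InjOn f (Set.Iio n)) {S : Finset ℤ}
    (hS : PinSet n (fun i => f i) = S) : Undercuts ((range n).image f \ S) S := by
  intro p hp
  have mem_S {x : ℤ} : x ∈ S ↔ x ∈ PinSet n (fun i => f i) := by rw [hS, mem_coe]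
  let I : Finset ℕ :=
    {i ∈ range n | i + 2 < n ∧ f i < f (i + 1) ∧ f (i + 2) < f (i + 1) ∧ f (i + 1) ≤ p}
  have hSI : {q ∈ S | q ≤ p} ⊆ I.image fun i => f (i + 1) := by
    intro q hq
    obtain ⟨hqS, hqp⟩ := mem_filter.1 hq
    obtain ⟨i, hin, hleft, hright, rfl⟩ := mem_pinSet_iff.1 (mem_S.1 hqS)
    exact mem_image_of_mem _
      (mem_filter.2 ⟨mem_range.2 (by omega), hin, hleft, hright, hqp⟩)
  have hI : I.Nonempty := image_nonempty.1 ⟨p, hSI (mem_filter.2 ⟨hp, le_rfl⟩)⟩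
  let i₀ := I.min' hI
  let J : Finset ℕ := insert i₀ (I.image (· + 2))
  have hJ_card : #J = #I + 1 := by
    rw [card_insert_of_notMem, card_image_of_injective _ (add_left_injective 2)]
    intro h
    obtain ⟨i, hi, hi₀⟩ := mem_image.1 h
    have := I.min'_le i hi
    omega
  have hJ : ∀ j ∈ J, j < n ∧ f j < p ∧ f j ∉ S := by
    intro j hj
    obtain rfl | hj := mem_insert.1 hj
    · obtain ⟨-, hin, hleft, -, hle⟩ := mem_filter.1 (I.min'_mem hI)
      exact ⟨by omega, hleft.trans_le hle,
        fun h => notMem_pinSet_of_lt_succ hf (by omega) hleft (mem_S.1 h)⟩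
    · obtain ⟨i, hi, rfl⟩ := mem_image.1 hj
      obtain ⟨-, hin, -, hright, hle⟩ := mem_filter.1 hi
      exact ⟨hin, hright.trans_le hle,
        fun h => notMem_pinSet_of_succ_lt hf hin hright (mem_S.1 h)⟩
  calc #{q ∈ S | q ≤ p} ≤ #I := (card_le_card hSI).trans card_image_le
    _ < #J := by omega
    _ = #(J.image f) := (card_image_of_injOn (hf.mono fun j hj => (hJ j hj).1)).symm
    _ ≤ #{v ∈ (range n).image f \ S | v < p} := card_le_card <| image_subset_iff.2 fun j hj =>
      mem_filter.2 ⟨mem_sdiff.2 ⟨mem_image_of_mem f (mem_range.2 (hJ j hj).1), (hJ j hj).2.2⟩,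
        (hJ j hj).2.1⟩

lemma pinSet_subset_image {n : ℕ} (w : Fin n → ℤ) : PinSet n w ⊆ univ.image w := by
  rintro _ ⟨i, -, hi, rfl, -⟩
  exact mem_coe.2 (mem_image_of_mem w (mem_univ _))

lemma apsOn_iff_exists_image_eq {n : ℕ} {X S : Finset ℤ} (hX : #X = n) :
    APSOn X S ↔
      ∃ w : Fin n → ℤ, Function.Injective w ∧ univ.image w = X ∧ PinSet n w = ↑S := by
  subst hX
  refine exists_congr fun w => and_congr_right fun hw => and_congr_left fun _ => ⟨fun hwX => ?_, ?_⟩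
  · refine eq_of_subset_of_card_le (image_subset_iff.2 fun i _ => hwX i) ?_
    rw [card_image_of_injective _ hw, card_univ, Fintype.card_fin]
  · rintro hwX i
    exact hwX ▸ mem_image_of_mem w (mem_univ i)

theorem apsOn_iff {X S : Finset ℤ} : APSOn X S ↔ S ⊆ X ∧ Undercuts (X \ S) S := by
  constructor
  · rw [apsOn_iff_exists_image_eq rfl]
    rintro ⟨w, hw, hwX, hS⟩
    have hSX := hS ▸ pinSet_subset_image w
    rw [hwX, coe_subset] at hSX
    refine ⟨hSX, ?_⟩
    obtain ⟨f, rfl⟩ : ∃ f : ℕ → ℤ, w = fun i : Fin _ => f i :=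
      ⟨Function.extend Fin.val w 0, funext fun i => (Fin.val_injective.extend_apply w 0 i).symm⟩
    rw [← hwX, image_univ_fin_eq_image_range]
    refine undercuts_of_pinSet_eq (fun i hi j hj hij => ?_) hS
    exact congrArg Fin.val (@hw ⟨i, hi⟩ ⟨j, hj⟩ hij)
  · rintro ⟨hSX, h⟩
    obtain ⟨s, hs, hsS⟩ := exists_strictMonoOn_image_range_eq S
    obtain ⟨v, hv, hvX⟩ := exists_strictMonoOn_image_range_eq (X \ S)
    have hcard : #S + #(X \ S) = #X := by rw [add_comm, card_sdiff_add_card_eq_card hSX]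
    have hle : #S ≤ #(X \ S) := by
      obtain rfl | hS := S.eq_empty_or_nonempty
      · exact Nat.zero_le _
      · exact (h.card_lt_card hS).le
    have himage : univ.image (fun i : Fin (#S + #(X \ S)) => zigzag #S s v i) = X := by
      rw [image_univ_fin_eq_image_range, image_zigzag hle, hsS, hvX, union_sdiff_of_subset hSX]
    refine (apsOn_iff_exists_image_eq hcard.symm).2 ⟨_, ?_, himage, ?_⟩
    · rw [← Set.injOn_univ, ← coe_univ, ← card_image_iff, himage, card_univ, Fintype.card_fin,
        hcard]
    · rw [pinSet_zigzag hv fun j hj => h.exists_succ_lt hs hsS hv hvX hj, hsS]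

end Words

section SignedSets

open Finset

/-- A signed set of rank `n`: a subset of `{±1, …, ±n}` containing at most one of `i`, `-i` for each
`i`. Those with `n` elements are the sets of entries of the signed permutations of rank `n`. -/
structure IsSignedSet (n : ℕ) (S : Finset ℤ) : Prop where
  natAbs_mem_Icc : ∀ s ∈ S, s.natAbs ∈ Icc 1 n
  injOn_natAbs : Set.InjOn Int.natAbs S

/-- The elements of `{1, …, n}` that are not absolute values of elements of `S`. -/
def freeValues (n : ℕ) (S : Finset ℤ) : Finset ℕ := Icc 1 n \ S.image Int.natAbs

/-- The integer with absolute value `c` that is positive exactly when `c ∈ P` (for `c ≠ 0`). -/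
def withSign (P : Finset ℕ) (c : ℕ) : ℤ := if c ∈ P then c else -c

/-- The completion of `S` by its free values, given positive signs on `P` and negative signs off
`P`. -/
def fill (n : ℕ) (S : Finset ℤ) (P : Finset ℕ) : Finset ℤ := (freeValues n S).image (withSign P)

variable {n : ℕ} {S X : Finset ℤ} {P Q : Finset ℕ}

lemma isSignedPerm_iff {w : Fin n → ℤ} :
    IsSignedPerm n w ↔ Function.Injective w ∧ IsSignedSet n (univ.image w) := by
  have injective_iff : (Function.Injective fun i => |w i|) ↔
      Function.Injective w ∧ Set.InjOn Int.natAbs (univ.image w) := by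
    rw [coe_image, coe_univ, Set.image_univ]
    simp only [Int.abs_eq_natAbs]
    refine ⟨fun h => ⟨fun i j hij => h (by simp only [hij]), ?_⟩, fun ⟨hw, hinj⟩ i j hij =>
      hw (hinj ⟨i, rfl⟩ ⟨j, rfl⟩ (Int.ofNat_inj.1 hij))⟩
    rintro _ ⟨i, rfl⟩ _ ⟨j, rfl⟩ hij
    exact congrArg w (h (congrArg Int.ofNat hij))
  have mem_iff (i : Fin n) : 1 ≤ |w i| ∧ |w i| ≤ (n : ℤ) ↔ (w i).natAbs ∈ Icc 1 n := by
    rw [Int.abs_eq_natAbs, mem_Icc]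
    omega
  rw [IsSignedPerm, injective_iff, and_left_comm]
  refine and_congr_right fun _ => ⟨fun ⟨hmem, hinj⟩ => ⟨?_, hinj⟩, fun h => ⟨fun i => ?_, h.2⟩⟩
  · exact forall_mem_image.2 fun i _ => (mem_iff i).1 (hmem i)
  · exact (mem_iff i).2 (h.1 _ (mem_image_of_mem w (mem_univ i)))

lemma natAbs_withSign (P : Finset ℕ) (c : ℕ) : (withSign P c).natAbs = c := by
  unfold withSign
  split_ifs <;> omega

lemma withSign_injective (P : Finset ℕ) : Function.Injective (withSign P) :=
  Function.LeftInverse.injective (natAbs_withSign P)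

lemma withSign_neg_iff {c : ℕ} (hc : c ≠ 0) : withSign P c < 0 ↔ c ∉ P := by
  unfold withSign
  split_ifs with hcP
  · simp [hcP]
  · simp [hcP, Nat.pos_of_ne_zero hc]

lemma withSign_mono (hPQ : P ⊆ Q) (c : ℕ) : withSign P c ≤ withSign Q c := by
  unfold withSign
  split_ifs with hP hQ hQ
  · rfl
  · exact absurd (hPQ hP) hQ
  · omega
  · rfl

lemma withSign_empty (c : ℕ) : withSign ∅ c = -c := if_neg (notMem_empty c)

lemma natAbs_notMem_freeValues {s : ℤ} (hs : s ∈ S) : s.natAbs ∉ freeValues n S := fun h =>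
  (mem_sdiff.1 h).2 (mem_image_of_mem _ hs)

lemma disjoint_fill (n : ℕ) (S : Finset ℤ) (P : Finset ℕ) : Disjoint S (fill n S P) := by
  rw [disjoint_left]
  rintro x hxS hx
  obtain ⟨c, hc, rfl⟩ := mem_image.1 hx
  exact (mem_sdiff.1 hc).2 (mem_image.2 ⟨_, hxS, natAbs_withSign P c⟩)

lemma card_fill (n : ℕ) (S : Finset ℤ) (P : Finset ℕ) : #(fill n S P) = #(freeValues n S) :=
  card_image_of_injective _ (withSign_injective P)

lemma undercuts_fill_iff :
    Undercuts (fill n S P) S ↔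
      ∀ p ∈ S, #{q ∈ S | q ≤ p} < #{c ∈ freeValues n S | withSign P c < p} := by
  refine forall₂_congr fun p _ => ?_
  rw [fill, filter_image, card_image_of_injective _ (withSign_injective P)]

lemma Undercuts.fill_anti (h : Undercuts (fill n S Q) S) (hPQ : P ⊆ Q) :
    Undercuts (fill n S P) S := by
  rw [undercuts_fill_iff] at h ⊢
  exact fun p hp => (h p hp).trans_le <| card_le_card <|
    monotone_filter_right _ fun c _ hc => (withSign_mono hPQ c).trans_lt hc

namespace IsSignedSet

lemma mono (h : IsSignedSet n X) (hSX : S ⊆ X) : IsSignedSet n S :=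
  ⟨fun s hs => h.natAbs_mem_Icc s (hSX hs), h.injOn_natAbs.mono hSX⟩

lemma image_natAbs_subset (h : IsSignedSet n S) : S.image Int.natAbs ⊆ Icc 1 n :=
  image_subset_iff.2 h.natAbs_mem_Icc

lemma image_natAbs_eq (h : IsSignedSet n X) (hX : #X = n) : X.image Int.natAbs = Icc 1 n :=
  eq_of_subset_of_card_le h.image_natAbs_subset <| by
    rw [card_image_of_injOn h.injOn_natAbs, hX, Nat.card_Icc, Nat.add_sub_cancel]

lemma card_filter_add_card_filter (h : IsSignedSet n S) {a : ℕ} (ha : a ≠ 0) :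
    #{s ∈ S | a ≤ s.natAbs} + #{c ∈ freeValues n S | a ≤ c} = n + 1 - a := by
  have himage : #{c ∈ S.image Int.natAbs | a ≤ c} = #{s ∈ S | a ≤ s.natAbs} := by
    rw [filter_image, card_image_of_injOn (h.injOn_natAbs.mono (filter_subset _ _))]
  have hIcc : {c ∈ Icc 1 n | a ≤ c} = Icc a n := by
    ext c
    simp only [mem_filter, mem_Icc]
    omega
  rw [← himage, freeValues, ← card_union_of_disjoint (disjoint_filter_filter disjoint_sdiff),
    ← filter_union, union_sdiff_of_subset h.image_natAbs_subset, hIcc, Nat.card_Icc]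

lemma card_add_card_freeValues (h : IsSignedSet n S) : #S + #(freeValues n S) = n := by
  rw [← card_image_of_injOn h.injOn_natAbs, add_comm, freeValues,
    card_sdiff_add_card_eq_card h.image_natAbs_subset, Nat.card_Icc, Nat.add_sub_cancel]

lemma card_union_fill (h : IsSignedSet n S) (P : Finset ℕ) : #(S ∪ fill n S P) = n := by
  rw [card_union_of_disjoint (disjoint_fill n S P), card_fill, h.card_add_card_freeValues]

lemma union_fill (h : IsSignedSet n S) (P : Finset ℕ) : IsSignedSet n (S ∪ fill n S P) := by
  have hfill : ∀ x ∈ fill n S P, x.natAbs ∈ freeValues n S :=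
    forall_mem_image.2 fun c hc => by rwa [natAbs_withSign]
  constructor
  · intro x hx
    exact (mem_union.1 hx).elim (h.natAbs_mem_Icc x) fun hx => (mem_sdiff.1 (hfill x hx)).1
  · rw [coe_union, Set.injOn_union (disjoint_coe.2 (disjoint_fill n S P))]
    refine ⟨h.injOn_natAbs, ?_, fun s hs x hx hsx => ?_⟩
    · rw [fill, coe_image]
      rintro _ ⟨c, -, rfl⟩ _ ⟨d, -, rfl⟩ hcd
      rw [natAbs_withSign, natAbs_withSign] at hcd
      rw [hcd]
    · exact (mem_sdiff.1 (hfill x hx)).2 (hsx ▸ mem_image_of_mem _ hs)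

lemma exists_eq_union_fill (hX : IsSignedSet n X) (hcard : #X = n) (hSX : S ⊆ X) :
    ∃ P ⊆ freeValues n S, X = S ∪ fill n S P := by
  have hS := hX.mono hSX
  let P : Finset ℕ := {c ∈ freeValues n S | (c : ℤ) ∈ X}
  refine ⟨P, filter_subset _ _, Eq.symm (eq_of_subset_of_card_le ?_ ?_)⟩
  · refine union_subset hSX (image_subset_iff.2 fun c hc => ?_)
    obtain ⟨x, hx, hxc⟩ :=
      mem_image.1 ((hX.image_natAbs_eq hcard).symm ▸ (mem_sdiff.1 hc).1)
    unfold withSign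
    split_ifs with hcP
    · exact (mem_filter.1 hcP).2
    · obtain rfl | rfl := Int.natAbs_eq_iff.1 hxc
      · exact absurd (mem_filter.2 ⟨hc, hx⟩) hcP
      · exact hx
  · rw [hcard, hS.card_union_fill]

end IsSignedSet

theorem exists_isSignedPerm_pinSet_iff (Q : Finset ℤ → Prop) :
    (∃ w : Fin n → ℤ, IsSignedPerm n w ∧ Q (univ.image w) ∧ PinSet n w = S) ↔
      IsSignedSet n S ∧
        ∃ P ⊆ freeValues n S, Q (S ∪ fill n S P) ∧ Undercuts (fill n S P) S := by
  constructor
  · rintro ⟨w, hw, hQ, hS⟩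
    obtain ⟨hinj, hX⟩ := isSignedPerm_iff.1 hw
    have hcard : #(univ.image w) = n := by
      rw [card_image_of_injective _ hinj, card_univ, Fintype.card_fin]
    obtain ⟨hSX, hunder⟩ :=
      apsOn_iff.1 ((apsOn_iff_exists_image_eq hcard).2 ⟨w, hinj, rfl, hS⟩)
    obtain ⟨P, hP, hPX⟩ := hX.exists_eq_union_fill hcard hSX
    rw [hPX] at hQ hunder
    rw [union_sdiff_cancel_left (disjoint_fill n S P)] at hunder
    exact ⟨hX.mono hSX, P, hP, hQ, hunder⟩
  · rintro ⟨hS, P, -, hQ, hunder⟩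
    rw [← union_sdiff_cancel_left (disjoint_fill n S P)] at hunder
    obtain ⟨w, hinj, hwX, hw⟩ :=
      (apsOn_iff_exists_image_eq (hS.card_union_fill P)).1
        (apsOn_iff.2 ⟨subset_union_left, hunder⟩)
    exact ⟨w, isSignedPerm_iff.2 ⟨hinj, hwX ▸ hS.union_fill P⟩, hwX ▸ hQ, hw⟩

theorem apsB_iff : APSB n S ↔ IsSignedSet n S ∧ Undercuts (fill n S ∅) S := by
  have h := exists_isSignedPerm_pinSet_iff (n := n) (S := S) fun _ => True
  simp only [true_and] at h
  rw [APSB, h]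
  exact and_congr_right fun _ => ⟨fun ⟨P, _, hP⟩ => hP.fill_anti (empty_subset P),
    fun h => ⟨∅, empty_subset _, h⟩⟩

lemma card_filter_neg_union_fill (n : ℕ) (S : Finset ℤ) (P : Finset ℕ) :
    #{x ∈ S ∪ fill n S P | x < 0} = #{s ∈ S | s < 0} + #(freeValues n S \ P) := by
  have hfilter : {c ∈ freeValues n S | withSign P c < 0} = freeValues n S \ P := by
    rw [← filter_notMem_eq_sdiff]
    refine filter_congr fun c hc => withSign_neg_iff ?_
    have := mem_Icc.1 (mem_sdiff.1 hc).1
    omega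
  rw [filter_union, card_union_of_disjoint (disjoint_filter_filter (disjoint_fill n S P)), fill,
    filter_image, card_image_of_injective _ (withSign_injective P), hfilter]

theorem apsD_iff :
    APSD n S ↔ IsSignedSet n S ∧ ∃ P ⊆ freeValues n S,
      Even (#{s ∈ S | s < 0} + #(freeValues n S \ P)) ∧ Undercuts (fill n S P) S := by
  simp only [← card_filter_neg_union_fill]
  rw [← exists_isSignedPerm_pinSet_iff fun X => Even #{x ∈ X | x < 0}]
  refine exists_congr fun w => and_congr_right fun hw => ?_
  rw [filter_image, card_image_of_injective _ (isSignedPerm_iff.1 hw).1]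

/- Making a single free value positive changes the parity of the number of negative entries. -/
theorem apsB_and_not_apsD_iff :
    APSB n S ∧ ¬ APSD n S ↔ IsSignedSet n S ∧ Undercuts (fill n S ∅) S ∧
      Odd (#{s ∈ S | s < 0} + #(freeValues n S)) ∧
        ∀ P ⊆ freeValues n S, P.Nonempty → ¬ Undercuts (fill n S P) S := by
  rw [apsB_iff, apsD_iff, and_assoc]
  refine and_congr_right fun hS => and_congr_right fun h => ?_
  rw [not_and]
  constructor
  · intro hD
    have hD := hD hS
    push Not at hD
    have hodd := Nat.not_even_iff_odd.1 fun he => hD ∅ (empty_subset _) (by rwa [sdiff_empty]) h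
    refine ⟨hodd, fun P hP ⟨v, hv⟩ hunder => ?_⟩
    have hvP := singleton_subset_iff.2 hv
    refine hD {v} (hvP.trans hP) ?_ (hunder.fill_anti hvP)
    have hcard := card_sdiff_add_card_eq_card (hvP.trans hP)
    rw [card_singleton] at hcard
    rw [← hcard, ← add_assoc, Nat.odd_add_one] at hodd
    exact Nat.not_odd_iff_even.1 hodd
  · rintro ⟨hodd, hnon⟩ - ⟨P, hP, heven, hunder⟩
    obtain rfl | hne := P.eq_empty_or_nonempty
    · rw [sdiff_empty] at heven
      exact Nat.not_even_iff_odd.2 hodd heven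
    · exact hnon P hP hne hunder

lemma freeValues_nonempty_of_undercuts (hn : 0 < n) (h : Undercuts (fill n S P) S) :
    (freeValues n S).Nonempty := by
  obtain rfl | hS := S.eq_empty_or_nonempty
  · rw [freeValues, image_empty, sdiff_empty]
    exact nonempty_Icc.2 hn
  · rw [← card_pos, ← card_fill n S P]
    exact hS.card_pos.trans (h.card_lt_card hS)

lemma withSign_singleton_of_ne {b c : ℕ} (hcb : c ≠ b) : withSign {b} c = -c :=
  if_neg (by rwa [mem_singleton])

lemma exists_of_not_undercuts_fill_singleton (h : Undercuts (fill n S ∅) S) {b : ℕ}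
    (hnot : ¬ Undercuts (fill n S {b}) S) :
    ∃ p ∈ S, -b < p ∧ p < b ∧
      #{c ∈ freeValues n S | withSign {b} c < p} ≤ #{q ∈ S | q ≤ p} := by
  rw [undercuts_fill_iff] at hnot
  push Not at hnot
  obtain ⟨p, hp, hle⟩ := hnot
  obtain ⟨c, hc, hcp⟩ :=
    exists_mem_notMem_of_card_lt_card (hle.trans_lt (undercuts_fill_iff.1 h p hp))
  obtain ⟨hcF, hlt⟩ := mem_filter.1 hc
  rw [withSign_empty] at hlt
  obtain rfl : c = b := by
    by_contra hcb
    exact hcp (mem_filter.2 ⟨hcF, (withSign_singleton_of_ne hcb).trans_lt hlt⟩)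
  have hpc : p ≠ c := fun h => natAbs_notMem_freeValues hp (by rwa [h])
  have hpc_le : p ≤ c := not_lt.1 fun h => hcp <| mem_filter.2 ⟨hcF, by
    rwa [withSign, if_pos (mem_singleton_self c)]⟩
  exact ⟨p, hp, hlt, hpc_le.lt_of_ne hpc, hle⟩

namespace IsSignedSet

lemma of_not_undercuts_fill_singleton (hS : IsSignedSet n S) (h : Undercuts (fill n S ∅) S) {b : ℕ}
    (hb : IsLeast (freeValues n S : Set ℕ) b) (hnot : ¬ Undercuts (fill n S {b}) S) :
    n = 2 * #S + 1 ∧ 1 ∉ freeValues n S ∧ ∀ s ∈ S, ∀ c ∈ freeValues n S, s < (c : ℤ) := by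
  obtain ⟨hbF, hb_le⟩ := hb
  obtain ⟨p, hp, hbp, hpb, hle⟩ := exists_of_not_undercuts_fill_singleton h hnot
  have hp0 := mem_Icc.1 (hS.natAbs_mem_Icc p hp)
  have herase : (freeValues n S).erase b ⊆ {c ∈ freeValues n S | withSign {b} c < p} := by
    intro c hc
    obtain ⟨hcb, hcF⟩ := mem_erase.1 hc
    have := hb_le hcF
    exact mem_filter.2 ⟨hcF, by rw [withSign_singleton_of_ne hcb]; omega⟩
  have hcard_erase := card_le_card herase
  rw [card_erase_of_mem hbF] at hcard_erase
  have hlt_card := h.card_lt_card ⟨p, hp⟩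
  rw [card_fill] at hlt_card
  have hfilter_le := card_filter_le S (· ≤ p)
  have hcard := hS.card_add_card_freeValues
  refine ⟨by omega, fun h1 => ?_, fun s hs c hc => ?_⟩
  · have := hb_le h1
    omega
  · have hSp : ∀ s ∈ S, s ≤ p := card_filter_eq_iff.1 (by omega)
    have := hSp s hs
    have := hb_le hc
    omega

lemma forall_not_undercuts_fill_iff (hS : IsSignedSet n S) (hn : 0 < n)
    (h : Undercuts (fill n S ∅) S) :
    (∀ P ⊆ freeValues n S, P.Nonempty → ¬ Undercuts (fill n S P) S) ↔
      n = 2 * #S + 1 ∧ 1 ∉ freeValues n S ∧ ∀ s ∈ S, ∀ c ∈ freeValues n S, s < (c : ℤ) := by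
  constructor
  · intro hnot
    have hF := freeValues_nonempty_of_undercuts hn h
    exact hS.of_not_undercuts_fill_singleton h (isLeast_min' _ hF)
      (hnot _ (singleton_subset_iff.2 (min'_mem _ hF)) (singleton_nonempty _))
  · rintro ⟨hcard, h1, hlt⟩ P hP ⟨v, hv⟩ hunder
    have hSne : S.Nonempty := by
      rw [← image_nonempty (f := Int.natAbs)]
      exact ⟨1, by_contra fun h => h1 (mem_sdiff.2 ⟨mem_Icc.2 ⟨le_rfl, hn⟩, h⟩)⟩
    have hmax := S.max'_mem hSne
    have hsub : {c ∈ freeValues n S | withSign P c < S.max' hSne} ⊆ (freeValues n S).erase v := by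
      intro c hc
      obtain ⟨hcF, hcp⟩ := mem_filter.1 hc
      refine mem_erase.2 ⟨?_, hcF⟩
      rintro rfl
      rw [withSign, if_pos hv] at hcp
      exact hcp.not_gt (hlt _ hmax _ hcF)
    have hlt_card := undercuts_fill_iff.1 hunder _ hmax
    rw [filter_true_of_mem fun q hq => S.le_max' q hq] at hlt_card
    have hle := card_le_card hsub
    rw [card_erase_of_mem (hP hv)] at hle
    have := hS.card_add_card_freeValues
    omega

lemma two_mul_card_filter_le (hS : IsSignedSet n S) (hcard : n = 2 * #S + 1)
    (hlt : ∀ s ∈ S, ∀ c ∈ freeValues n S, s < (c : ℤ)) (h : Undercuts (fill n S ∅) S) (a : ℕ) :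
    2 * #{s ∈ S | a ≤ s.natAbs} ≤ n - a := by
  obtain rfl | ha := eq_or_ne a 0
  · have := card_filter_le S (0 ≤ ·.natAbs)
    omega
  obtain hA | hA := {s ∈ S | a ≤ s.natAbs}.eq_empty_or_nonempty
  · rw [hA, card_empty]
    exact Nat.zero_le _
  suffices #{s ∈ S | a ≤ s.natAbs} < #{c ∈ freeValues n S | a ≤ c} by
    have := hS.card_filter_add_card_filter ha
    omega
  obtain ⟨hpS, hpa⟩ := mem_filter.1 (max'_mem _ hA)
  by_cases hp : 0 < max' _ hA
  · have hF : ∀ c ∈ freeValues n S, a ≤ c := fun c hc => by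
      have := hlt _ hpS c hc
      omega
    rw [filter_true_of_mem hF]
    have := card_filter_le S (a ≤ ·.natAbs)
    have := hS.card_add_card_freeValues
    omega
  · calc #{s ∈ S | a ≤ s.natAbs} ≤ #{s ∈ S | s ≤ max' _ hA} :=
          card_le_card fun s hs => mem_filter.2 ⟨(mem_filter.1 hs).1, le_max' _ s hs⟩
      _ < #{c ∈ freeValues n S | withSign ∅ c < max' _ hA} := undercuts_fill_iff.1 h _ hpS
      _ ≤ #{c ∈ freeValues n S | a ≤ c} := card_le_card <| monotone_filter_right _ fun c _ hc => by
          rw [withSign_empty] at hc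
          omega

lemma undercuts_fill_empty_of_two_mul_card_filter_le (hS : IsSignedSet n S)
    (h : ∀ a, 2 * #{s ∈ S | a ≤ s.natAbs} ≤ n - a) : Undercuts (fill n S ∅) S := by
  rw [undercuts_fill_iff]
  simp only [withSign_empty]
  have card_lt {a : ℕ} (ha : a ∈ Icc 1 n) :
      #{s ∈ S | a ≤ s.natAbs} < #{c ∈ freeValues n S | a ≤ c} := by
    obtain ⟨ha, han⟩ := mem_Icc.1 ha
    have := h a
    have := hS.card_filter_add_card_filter (a := a) (by omega)
    omega
  intro p hp
  have hp0 := hS.natAbs_mem_Icc p hp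
  obtain hneg | hpos := lt_or_ge p 0
  · refine (card_le_card ?_).trans_lt ((card_lt hp0).trans_le (card_le_card ?_))
    · exact monotone_filter_right _ fun q _ hq => by omega
    · refine monotone_filter_right _ fun c hc hpc => ?_
      have hcp : c ≠ p.natAbs := fun h => natAbs_notMem_freeValues hp (h ▸ hc)
      omega
  · rw [mem_Icc] at hp0
    refine (card_le_card ?_).trans_lt
      ((card_lt (mem_Icc.2 ⟨le_rfl, hp0.1.trans hp0.2⟩)).trans_le (card_le_card ?_))
    · exact monotone_filter_right _ fun q hq _ => (mem_Icc.1 (hS.natAbs_mem_Icc q hq)).1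
    · exact monotone_filter_right _ fun c _ hc => by omega

end IsSignedSet

end SignedSets

section BallotSets

open Finset

lemma encard_eq_encard_insert_add {α : Type*} [DecidableEq α] (𝓕 : Set (Finset α)) (e : α) :
    𝓕.encard = {T | e ∉ T ∧ insert e T ∈ 𝓕}.encard + {T ∈ 𝓕 | e ∉ T}.encard := by
  have himage : insert e '' {T | e ∉ T ∧ insert e T ∈ 𝓕} = {T ∈ 𝓕 | e ∈ T} := by
    ext T
    constructor
    · rintro ⟨T, ⟨-, hT⟩, rfl⟩
      exact ⟨hT, mem_insert_self e T⟩
    · rintro ⟨hT, he⟩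
      exact ⟨T.erase e, ⟨notMem_erase e T, by rwa [insert_erase he]⟩, insert_erase he⟩
  have hinj : Set.InjOn (insert e) {T : Finset α | e ∉ T ∧ insert e T ∈ 𝓕} := by
    intro T hT U hU hTU
    rw [← erase_insert hT.1, hTU, erase_insert hU.1]
  rw [← hinj.encard_image, himage, add_comm]
  exact (Set.encard_sdiff_add_encard_inter 𝓕 {T | e ∈ T}).symm

lemma notMem_image_natAbs_iff {T : Finset ℤ} {c : ℕ} :
    c ∉ T.image Int.natAbs ↔ (-c : ℤ) ∉ T ∧ (c : ℤ) ∉ T := by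
  rw [← not_or, not_iff_not, mem_image]
  constructor
  · rintro ⟨x, hx, hxc⟩
    obtain rfl | rfl := Int.natAbs_eq_iff.1 hxc
    · exact .inr hx
    · exact .inl hx
  · rintro (h | h) <;> exact ⟨_, h, by simp⟩

lemma encard_eq_encard_insert_neg_add {𝓕 : Set (Finset ℤ)}
    (h𝓕 : ∀ T ∈ 𝓕, Set.InjOn Int.natAbs T) {c : ℕ} (hc : c ≠ 0) :
    𝓕.encard = {T | c ∉ T.image Int.natAbs ∧ insert (-c : ℤ) T ∈ 𝓕}.encard +
      {T | c ∉ T.image Int.natAbs ∧ insert (c : ℤ) T ∈ 𝓕}.encard +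
        {T ∈ 𝓕 | c ∉ T.image Int.natAbs}.encard := by
  have notMem_insert {e : ℤ} {T : Finset ℤ} (he : e.natAbs = c) :
      e ∉ T ∧ insert e T ∈ 𝓕 ↔ c ∉ T.image Int.natAbs ∧ insert e T ∈ 𝓕 := by
    refine and_congr_left fun hT => ⟨fun heT => ?_, fun hcT heT => ?_⟩
    · have hinj := h𝓕 _ hT
      rw [coe_insert, Set.injOn_insert heT, he, ← coe_image] at hinj
      exact hinj.2
    · exact hcT (he ▸ mem_image_of_mem _ heT)
  rw [encard_eq_encard_insert_add 𝓕 (-c), encard_eq_encard_insert_add {T ∈ 𝓕 | _} (c : ℤ),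
    ← add_assoc]
  congr 3
  · ext T
    exact notMem_insert (by simp)
  · ext T
    have hne : (-c : ℤ) ≠ c := by omega
    refine and_assoc.symm.trans ((and_congr_left fun _ => notMem_insert (by simp)).trans ?_)
    refine and_iff_left_of_imp fun ⟨hcT, _⟩ h => ?_
    exact (notMem_image_natAbs_iff.1 hcT).1 ((mem_insert.1 h).resolve_left hne)
  · ext T
    refine and_assoc.trans (and_congr_right fun _ => ?_)
    exact notMem_image_natAbs_iff.symm

/-- Sets of `d` integers with distinct absolute values `≥ c` such that, for each `a ≤ n`, fewer than
half of the integers `a, …, n` are absolute values of elements of the set: read downwards from `n`,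
the absolute values are the minority steps of a ballot sequence. The truncated subtraction `n - a`
also forces all of them to be `< n`. -/
structure IsBallot (c n d : ℕ) (T : Finset ℤ) : Prop where
  injOn_natAbs : Set.InjOn Int.natAbs T
  le_natAbs : ∀ s ∈ T, c ≤ s.natAbs
  card_eq : #T = d
  two_mul_card_filter_le : ∀ a, 2 * #{s ∈ T | a ≤ s.natAbs} ≤ n - a

/-- The ballot sets without positive elements. -/
def negBallotSets (c n d : ℕ) : Set (Finset ℤ) := {T | IsBallot c n d T ∧ ∀ s ∈ T, s < 0}

/-- The ballot sets whose positive elements lie in the initial run of consecutive absolute values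
starting at `c`. -/
def runBallotSets (c n d : ℕ) : Set (Finset ℤ) :=
  {T | IsBallot c n d T ∧ ∀ s ∈ T, ∀ t : ℕ, c ≤ t → (t : ℤ) ≤ s → t ∈ T.image Int.natAbs}

variable {c n d m : ℕ} {T : Finset ℤ} {e : ℤ}

lemma isBallot_zero_iff : IsBallot c n 0 T ↔ T = ∅ := by
  refine ⟨fun h => card_eq_zero.1 h.card_eq, ?_⟩
  rintro rfl
  exact ⟨by simp, by simp, card_empty, by simp⟩

lemma negBallotSets_zero (c n : ℕ) : negBallotSets c n 0 = {∅} := by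
  ext T
  simp +contextual [negBallotSets, isBallot_zero_iff]

lemma runBallotSets_zero (c n : ℕ) : runBallotSets c n 0 = {∅} := by
  ext T
  simp +contextual [runBallotSets, isBallot_zero_iff]

lemma IsBallot.two_mul_le (h : IsBallot c n d T) : 2 * d ≤ n - c := by
  have := h.two_mul_card_filter_le c
  rwa [filter_true_of_mem h.le_natAbs, h.card_eq] at this

lemma isBallot_and_notMem_iff :
    IsBallot c n d T ∧ c ∉ T.image Int.natAbs ↔ IsBallot (c + 1) n d T := by
  simp only [mem_image, not_exists, not_and]
  constructor
  · rintro ⟨h, hc⟩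
    exact ⟨h.injOn_natAbs, fun s hs => (h.le_natAbs s hs).lt_of_ne' (hc s hs), h.card_eq,
      h.two_mul_card_filter_le⟩
  · intro h
    exact ⟨⟨h.injOn_natAbs, fun s hs => Nat.le_of_lt (h.le_natAbs s hs), h.card_eq,
      h.two_mul_card_filter_le⟩, fun s hs => Nat.ne_of_gt (h.le_natAbs s hs)⟩

lemma notMem_and_isBallot_insert_iff (he : e.natAbs = c) (hd : 2 * (d + 1) ≤ n - c) :
    c ∉ T.image Int.natAbs ∧ IsBallot c n (d + 1) (insert e T) ↔ IsBallot (c + 1) n d T := by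
  constructor
  · rintro ⟨hc, h⟩
    have heT : e ∉ T := fun heT => hc (he ▸ mem_image_of_mem _ heT)
    have hcard := h.card_eq
    rw [card_insert_of_notMem heT] at hcard
    refine isBallot_and_notMem_iff.1 ⟨⟨h.injOn_natAbs.mono (subset_insert e T), fun s hs =>
      h.le_natAbs s (mem_insert_of_mem hs), by omega, fun a => ?_⟩, hc⟩
    exact (Nat.mul_le_mul_left 2 (card_le_card (filter_subset_filter _ (subset_insert e T)))).trans
      (h.two_mul_card_filter_le a)
  · intro h'
    obtain ⟨h, hc⟩ := isBallot_and_notMem_iff.2 h'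
    have heT : e ∉ T := fun heT => hc (he ▸ mem_image_of_mem _ heT)
    refine ⟨hc, ?_, ?_, by rw [card_insert_of_notMem heT, h.card_eq], fun a => ?_⟩
    · rw [coe_insert, Set.injOn_insert heT, he, ← coe_image]
      exact ⟨h.injOn_natAbs, hc⟩
    · exact (forall_mem_insert _ _ _).2 ⟨he.ge, h.le_natAbs⟩
    · rw [filter_insert]
      split_ifs with ha
      · have := card_insert_le e {s ∈ T | a ≤ s.natAbs}
        have := card_filter_le T (a ≤ ·.natAbs)
        have := h.card_eq
        omega
      · exact h.two_mul_card_filter_le a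

lemma notMem_and_insert_mem_runBallotSets_iff (he : e.natAbs = c) (hd : 2 * (d + 1) ≤ n - c) :
    c ∉ T.image Int.natAbs ∧ insert e T ∈ runBallotSets c n (d + 1) ↔
      T ∈ runBallotSets (c + 1) n d := by
  refine and_assoc.symm.trans (and_congr (notMem_and_isBallot_insert_iff he hd) ?_)
  rw [image_insert, he]
  constructor
  · intro h s hs t hct hts
    exact mem_of_mem_insert_of_ne (h s (mem_insert_of_mem hs) t (by omega) hts) (by omega)
  · intro h s hs t hct hts
    obtain rfl | hct := hct.eq_or_lt
    · exact mem_insert_self _ _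
    · refine mem_insert_of_mem (h s (mem_of_mem_insert_of_ne hs ?_) t hct hts)
      omega

lemma mem_runBallotSets_and_notMem_iff :
    T ∈ runBallotSets c n d ∧ c ∉ T.image Int.natAbs ↔ T ∈ negBallotSets (c + 1) n d := by
  refine and_right_comm.trans ?_
  rw [isBallot_and_notMem_iff]
  refine and_congr_right fun h => ⟨fun hrun s hs => ?_, fun hneg s hs t _ hts => ?_⟩
  · have hcT := (isBallot_and_notMem_iff.2 h).2
    have hcs := h.le_natAbs s hs
    by_contra! hs0
    exact hcT (hrun s hs c le_rfl (by omega))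
  · have := hneg s hs
    omega

lemma encard_runBallotSets_succ (hc : c ≠ 0) (hd : 2 * (d + 1) ≤ n - c) :
    (runBallotSets c n (d + 1)).encard =
      2 * (runBallotSets (c + 1) n d).encard + (negBallotSets (c + 1) n (d + 1)).encard := by
  rw [encard_eq_encard_insert_neg_add (fun T hT => hT.1.injOn_natAbs) hc]
  simp only [notMem_and_insert_mem_runBallotSets_iff (e := -c) (by simp) hd,
    notMem_and_insert_mem_runBallotSets_iff (e := c) (by simp) hd,
    mem_runBallotSets_and_notMem_iff, Set.ofPred_mem_eq, two_mul]

lemma notMem_and_insert_neg_mem_negBallotSets_iff (hc : c ≠ 0) (hd : 2 * (d + 1) ≤ n - c) :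
    c ∉ T.image Int.natAbs ∧ insert (-c : ℤ) T ∈ negBallotSets c n (d + 1) ↔
      T ∈ negBallotSets (c + 1) n d := by
  refine and_assoc.symm.trans (and_congr (notMem_and_isBallot_insert_iff (by simp) hd) ?_)
  rw [forall_mem_insert]
  exact and_iff_right (by omega)

lemma mem_negBallotSets_and_notMem_iff :
    T ∈ negBallotSets c n d ∧ c ∉ T.image Int.natAbs ↔ T ∈ negBallotSets (c + 1) n d := by
  refine and_right_comm.trans ?_
  rw [isBallot_and_notMem_iff]
  rfl

lemma encard_negBallotSets_succ (hc : c ≠ 0) (hd : 2 * (d + 1) ≤ n - c) :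
    (negBallotSets c n (d + 1)).encard =
      (negBallotSets (c + 1) n d).encard + (negBallotSets (c + 1) n (d + 1)).encard := by
  have hpos : {T : Finset ℤ | c ∉ T.image Int.natAbs ∧
      insert (c : ℤ) T ∈ negBallotSets c n (d + 1)} = ∅ :=
    Set.eq_empty_of_forall_notMem fun T hT => by
      have := hT.2.2 c (mem_insert_self _ T)
      omega
  rw [encard_eq_encard_insert_neg_add (fun T hT => hT.1.injOn_natAbs) hc, hpos]
  simp only [notMem_and_insert_neg_mem_negBallotSets_iff hc hd, mem_negBallotSets_and_notMem_iff,
    Set.ofPred_mem_eq, Set.encard_empty, add_zero]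

lemma negBallotSets_eq_empty (hd : n - c < 2 * d) : negBallotSets c n d = ∅ :=
  Set.eq_empty_of_forall_notMem fun _ hT => hT.1.two_mul_le.not_gt hd

/- As in the ballot theorem, the count is a difference of two binomial coefficients; it is moved to
the other side because `ℕ∞` has no cancellation. -/
lemma encard_negBallotSets_add_choose (hc : c ≠ 0) (hn : c + m = n) (hd : 2 * (d + 1) ≤ m + 1) :
    (negBallotSets c n (d + 1)).encard + m.choose d = m.choose (d + 1) := by
  induction m generalizing c d with
  | zero => omega
  | succ m ih =>
    obtain hd' | hd' := hd.eq_or_lt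
    · rw [negBallotSets_eq_empty (by omega), Set.encard_empty, zero_add,
        Nat.choose_symm_of_eq_add (n := m + 1) (a := d) (b := d + 1) (by omega)]
    have hrec := encard_negBallotSets_succ (n := n) (d := d) hc (by omega)
    have ih_succ := ih (d := d) c.succ_ne_zero (by omega) (by omega)
    rw [hrec, Nat.choose_succ_succ m d, Nat.cast_add, ← ih_succ]
    cases d with
    | zero =>
      rw [negBallotSets_zero, Set.encard_singleton]
      simp only [Nat.choose_zero_right, Nat.cast_one]
      ring
    | succ d =>
      have ih_d := ih (d := d) c.succ_ne_zero (by omega) (by omega)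
      rw [Nat.choose_succ_succ m d, Nat.cast_add, ← ih_d]
      ring

lemma encard_runBallotSets (hc : c ≠ 0) (hn : c + m = n) (hd : 2 * d ≤ m) :
    (runBallotSets c n d).encard = m.choose d := by
  induction m generalizing c d with
  | zero =>
    obtain rfl : d = 0 := by omega
    rw [runBallotSets_zero, Set.encard_singleton, Nat.choose_zero_right, Nat.cast_one]
  | succ m ih =>
    cases d with
    | zero => rw [runBallotSets_zero, Set.encard_singleton, Nat.choose_zero_right, Nat.cast_one]
    | succ d =>
      rw [encard_runBallotSets_succ hc (by omega),
        ih c.succ_ne_zero (by omega) (by omega), two_mul, add_assoc,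
        add_comm (m.choose d : ℕ∞) (Set.encard _),
        encard_negBallotSets_add_choose c.succ_ne_zero (by omega) (by omega), ← Nat.cast_add,
        Nat.choose_succ_succ]

lemma even_card_filter_pos_insert_iff (he : e ∉ T) :
    Even #{s ∈ insert e T | 0 < s} ↔ (Even #{s ∈ T | 0 < s} ↔ ¬ 0 < e) := by
  rw [filter_insert]
  split_ifs with hpos
  · rw [card_insert_of_notMem fun h => he (mem_filter.1 h).1, Nat.even_add_one]
    exact (iff_false_right (not_not.2 hpos)).symm
  · exact (iff_true_right hpos).symm

/- The parity condition decides the sign of the element of absolute value `c`. -/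
lemma encard_runBallotSets_mem_even (hc : c ≠ 0) (hd : 2 * (d + 1) ≤ n - c) :
    {T | T ∈ runBallotSets c n (d + 1) ∧ c ∈ T.image Int.natAbs ∧ Even #{s ∈ T | 0 < s}}.encard =
      (runBallotSets (c + 1) n d).encard := by
  set 𝓕 : Set (Finset ℤ) :=
    {T | T ∈ runBallotSets c n (d + 1) ∧ c ∈ T.image Int.natAbs ∧ Even #{s ∈ T | 0 < s}}
  have insert_mem_iff {e : ℤ} (he : e.natAbs = c) (T : Finset ℤ) :
      c ∉ T.image Int.natAbs ∧ insert e T ∈ 𝓕 ↔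
        T ∈ runBallotSets (c + 1) n d ∧ (Even #{s ∈ T | 0 < s} ↔ ¬ 0 < e) := by
    rw [← notMem_and_insert_mem_runBallotSets_iff he hd, and_assoc]
    refine and_congr_right fun hcT => and_congr_right fun _ => ?_
    rw [even_card_filter_pos_insert_iff fun h => hcT (he ▸ mem_image_of_mem _ h), image_insert, he]
    exact and_iff_right (mem_insert_self _ _)
  have hnone : {T ∈ 𝓕 | c ∉ T.image Int.natAbs} = ∅ :=
    Set.eq_empty_of_forall_notMem fun T hT => hT.2 hT.1.2.1
  have hneg : {T | c ∉ T.image Int.natAbs ∧ insert (-c : ℤ) T ∈ 𝓕} =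
      runBallotSets (c + 1) n d ∩ {T | Even #{s ∈ T | 0 < s}} := Set.ext fun T =>
    (insert_mem_iff (by simp) T).trans <| and_congr_right fun _ => iff_true_right (by omega)
  have hpos : {T | c ∉ T.image Int.natAbs ∧ insert (c : ℤ) T ∈ 𝓕} =
      runBallotSets (c + 1) n d \ {T | Even #{s ∈ T | 0 < s}} := Set.ext fun T =>
    (insert_mem_iff (by simp) T).trans <| and_congr_right fun _ => iff_false_right (by omega)
  rw [encard_eq_encard_insert_neg_add (fun T hT => hT.1.1.injOn_natAbs) hc, hneg, hpos, hnone,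
    Set.encard_empty, add_zero, add_comm, Set.encard_sdiff_add_encard_inter]

end BallotSets

section OddRank

open Finset

variable {n d k : ℕ} {S : Finset ℤ}

namespace IsSignedSet

lemma odd_card_neg_add_card_freeValues_iff (hS : IsSignedSet n S) (hcard : n = 2 * #S + 1) :
    Odd (#{s ∈ S | s < 0} + #(freeValues n S)) ↔ Even #{s ∈ S | 0 < s} := by
  have hnonneg : {s ∈ S | ¬ s < 0} = {s ∈ S | 0 < s} := filter_congr fun s hs => by
    have := mem_Icc.1 (hS.natAbs_mem_Icc s hs)
    omega
  have hsplit := card_filter_add_card_filter_not (s := S) (· < 0)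
  rw [hnonneg] at hsplit
  have hfree := hS.card_add_card_freeValues
  rw [Nat.odd_iff, Nat.even_iff]
  omega

lemma mem_image_natAbs_iff (hS : IsSignedSet n S) {c : ℕ} :
    c ∈ S.image Int.natAbs ↔ c ∈ Icc 1 n ∧ c ∉ freeValues n S := by
  rw [freeValues, mem_sdiff, not_and, not_not]
  exact ⟨fun h => ⟨hS.image_natAbs_subset h, fun _ => h⟩, fun h => h.2 h.1⟩

lemma forall_lt_freeValues_iff (hS : IsSignedSet n S) :
    (∀ s ∈ S, ∀ c ∈ freeValues n S, s < (c : ℤ)) ↔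
      ∀ s ∈ S, ∀ c : ℕ, 1 ≤ c → (c : ℤ) ≤ s → c ∈ S.image Int.natAbs := by
  refine forall₂_congr fun s hs => forall_congr' fun c => ?_
  have hsn := (mem_Icc.1 (hS.natAbs_mem_Icc s hs)).2
  rw [hS.mem_image_natAbs_iff, mem_Icc]
  constructor
  · intro h hc hcs
    exact ⟨⟨hc, by omega⟩, fun hcF => (h hcF).not_ge hcs⟩
  · intro h hcF
    by_contra! hcs
    exact (h (mem_Icc.1 (mem_sdiff.1 hcF).1).1 hcs).2 hcF

end IsSignedSet

lemma IsBallot.isSignedSet (h : IsBallot 1 n d S) : IsSignedSet n S := by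
  refine ⟨fun s hs => mem_Icc.2 ⟨h.le_natAbs s hs, ?_⟩, h.injOn_natAbs⟩
  have hpos : 0 < #{t ∈ S | s.natAbs ≤ t.natAbs} := card_pos.2 ⟨s, mem_filter.2 ⟨hs, le_rfl⟩⟩
  have := h.two_mul_card_filter_le s.natAbs
  omega

theorem apsB_and_not_apsD_two_mul_add_one_iff :
    APSB (2 * k + 1) S ∧ ¬ APSD (2 * k + 1) S ↔
      S ∈ runBallotSets 1 (2 * k + 1) k ∧ 1 ∈ S.image Int.natAbs ∧ Even #{s ∈ S | 0 < s} := by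
  rw [apsB_and_not_apsD_iff]
  constructor
  · rintro ⟨hS, hunder, hodd, hnot⟩
    obtain ⟨hcard, h1, hlt⟩ := (hS.forall_not_undercuts_fill_iff (by omega) hunder).1 hnot
    have hball : IsBallot 1 (2 * k + 1) k S :=
      ⟨hS.injOn_natAbs, fun s hs => (mem_Icc.1 (hS.natAbs_mem_Icc s hs)).1, by omega,
        hS.two_mul_card_filter_le hcard hlt hunder⟩
    exact ⟨⟨hball, hS.forall_lt_freeValues_iff.1 hlt⟩,
      hS.mem_image_natAbs_iff.2 ⟨mem_Icc.2 ⟨le_rfl, by omega⟩, h1⟩,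
      (hS.odd_card_neg_add_card_freeValues_iff hcard).1 hodd⟩
  · rintro ⟨⟨hball, hrun⟩, h1, heven⟩
    have hS := hball.isSignedSet
    have hcard : 2 * k + 1 = 2 * #S + 1 := by rw [hball.card_eq]
    have hunder :=
      hS.undercuts_fill_empty_of_two_mul_card_filter_le hball.two_mul_card_filter_le
    exact ⟨hS, hunder, (hS.odd_card_neg_add_card_freeValues_iff hcard).2 heven,
      (hS.forall_not_undercuts_fill_iff (by omega) hunder).2
        ⟨hcard, (hS.mem_image_natAbs_iff.1 h1).2, hS.forall_lt_freeValues_iff.2 hrun⟩⟩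

end OddRank

theorem stmt16 (k : ℕ) (hk : 1 ≤ k) :
    {S : Finset ℤ | APSB (2 * k + 1) S ∧ ¬ APSD (2 * k + 1) S}.ncard
      = Nat.choose (2 * k - 1) k := by
  obtain ⟨d, rfl⟩ := Nat.exists_eq_add_of_le' hk
  simp only [apsB_and_not_apsD_two_mul_add_one_iff]
  rw [Set.ncard_def, encard_runBallotSets_mem_even one_ne_zero (by omega),
    encard_runBallotSets (m := 2 * d + 1) two_ne_zero (by omega) (by omega), ENat.toNat_natCast]
  exact Nat.choose_symm_of_eq_add (by omega)
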